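/- The complete graph K₂₁ admits a decomposition of its edge set into 8 C₃-factors and 2 C₇-factors. -/

import Mathlib

open SimpleGraph

/-- `F` is an `H`-factor (of the complete graph on its vertex type, or of any graph
containing it): every connected component of `F`, viewed as an induced subgraph,
is isomorphic to `H`.  Since `F` is a graph on all of `V`, it is automatically spanning. -/
def IsHFactor {V W : Type*} (H : SimpleGraph W) (F : SimpleGraph V) : Prop :=
  ∀ c : F.ConnectedComponent, Nonempty (F.induce c.supp ≃g H)

/-- A `C_k`-factor: a spanning subgraph each of whose connected components is a
cycle of length `k` (in particular it is 2-regular). -/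
def IsCycleFactor {V : Type*} (k : ℕ) (F : SimpleGraph V) : Prop :=
  IsHFactor (SimpleGraph.cycleGraph k) F

/-- `(G; C_m^r, C_k^s)`: a partition of the edge set of `G` into `r` `C_m`-factors
and `s` `C_k`-factors. -/
def IsCycleDecomp {V : Type*} (G : SimpleGraph V) (m k r s : ℕ) : Prop :=
  ∃ F : Fin r ⊕ Fin s → SimpleGraph V,
    (∀ i, F i ≤ G) ∧
    (∀ e ∈ G.edgeSet, ∃! i, e ∈ (F i).edgeSet) ∧
    (∀ i : Fin r, IsCycleFactor m (F (Sum.inl i))) ∧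
    (∀ j : Fin s, IsCycleFactor k (F (Sum.inr j)))

/-!
Identify the vertices with `ZMod 7 × Fin 3` and use the method of differences over `ZMod 7`.
The differences `±2 ^ a` and `±2 ^ (a + 1)` inside fibre `a` give two `C₇`-factors, and the mixed
difference `0` between distinct fibres gives one `C₃`-factor.  The remaining differences,
`±2 ^ (a + 2)` inside fibre `a` and all nonzero mixed ones, occur exactly once each in a single
`C₃`-factor, whose seven translates are the other `C₃`-factors.  That base factor is found by asking
for invariance under the symmetry `(x, a) ↦ (2 * x, a + 1)` of order three.
-/

section HFactor

variable {V V' W A : Type*} {H : SimpleGraph W} {F : SimpleGraph V} {F' : SimpleGraph V'}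

theorem IsHFactor.of_iso (hF' : IsHFactor H F') (φ : F ≃g F') : IsHFactor H F := fun c =>
  (hF' (φ.connectedComponentEquiv c)).map fun ψ =>
    Iso.comp ψ ⟨ConnectedComponent.isoEquivSupp φ c, φ.map_rel_iff⟩

theorem eq_of_reachable_of_adj_eq {p : V → A} (hp : ∀ u v, F.Adj u v → p u = p v) {u v : V}
    (huv : F.Reachable u v) : p u = p v := by
  obtain ⟨w⟩ := huv
  induction w with
  | nil => rfl
  | cons hadj _ ih => exact (hp _ _ hadj).trans ih

theorem supp_connectedComponentMk_eq_fiber {p : V → A} (hp : ∀ u v, F.Adj u v → p u = p v) {v : V}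
    (hv : (F.induce {u | p u = p v}).Preconnected) :
    (F.connectedComponentMk v).supp = {u | p u = p v} := by
  ext u
  rw [ConnectedComponent.mem_supp_iff, ConnectedComponent.eq]
  exact ⟨eq_of_reachable_of_adj_eq hp, fun huv =>
    (hv ⟨u, huv⟩ ⟨v, rfl⟩).map (Embedding.induce _).toHom⟩

theorem isHFactor_of_fibers (hH : H.Preconnected) {p : V → A}
    (hp : ∀ u v, F.Adj u v → p u = p v)
    (hfib : ∀ v, Nonempty (F.induce {u | p u = p v} ≃g H)) : IsHFactor H F := by
  refine ConnectedComponent.ind fun v => ?_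
  obtain ⟨φ⟩ := hfib v
  rw [supp_connectedComponentMk_eq_fiber hp (φ.preconnected_iff.2 hH)]
  exact ⟨φ⟩

end HFactor

section FiberCliques

variable {V W A : Type*}

/-- The disjoint union of the complete graphs on the fibres of `p`.  A partition into triangles is
encoded by any `p` that labels the vertices by their triangle. -/
def fiberCliques (p : V → A) : SimpleGraph V where
  Adj u v := u ≠ v ∧ p u = p v
  symm := ⟨fun _ _ h => ⟨h.1.symm, h.2.symm⟩⟩
  loopless := ⟨fun _ h => h.1 rfl⟩

instance [DecidableEq V] [DecidableEq A] (p : V → A) : DecidableRel (fiberCliques p).Adj :=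
  fun u v => inferInstanceAs (Decidable (u ≠ v ∧ p u = p v))

theorem isHFactor_top_fiberCliques {p : V → A} (hp : ∀ v, Nonempty ({u | p u = p v} ≃ W)) :
    IsHFactor (⊤ : SimpleGraph W) (fiberCliques p) := by
  refine isHFactor_of_fibers preconnected_top (p := p) (fun _ _ h => h.2) fun v => ?_
  have induce_fiber_eq_top : (fiberCliques p).induce {u | p u = p v} = ⊤ := by
    ext u w
    simpa [fiberCliques, Subtype.ext_iff] using fun _ => u.2.trans w.2.symm
  rw [induce_fiber_eq_top]
  exact (hp v).map Iso.completeGraph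

theorem isCycleFactor_three_fiberCliques [Fintype V] [DecidableEq A] {p : V → A}
    (hp : ∀ v, Fintype.card {u // p u = p v} = 3) : IsCycleFactor 3 (fiberCliques p) := by
  rw [IsCycleFactor, cycleGraph_three_eq_top]
  exact isHFactor_top_fiberCliques fun v => ⟨Fintype.equivFinOfCardEq (hp v)⟩

end FiberCliques

section FiberwiseGraph

variable {X W I : Type*}

/-- The disjoint union of the graphs `G i`, all on the same vertex type `X`, realised on `X × I`. -/
def fiberwiseGraph (G : I → SimpleGraph X) : SimpleGraph (X × I) where
  Adj u v := u.2 = v.2 ∧ (G u.2).Adj u.1 v.1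
  symm := ⟨fun _ _ h => ⟨h.1.symm, h.1 ▸ h.2.symm⟩⟩
  loopless := ⟨fun _ h => h.2.ne rfl⟩

instance [DecidableEq I] (G : I → SimpleGraph X) [∀ i, DecidableRel (G i).Adj] :
    DecidableRel (fiberwiseGraph G).Adj :=
  fun u v => inferInstanceAs (Decidable (u.2 = v.2 ∧ (G u.2).Adj u.1 v.1))

/-- The fibre over `i` of `fiberwiseGraph G` is a copy of `G i`. -/
def fiberwiseGraphInduceIso (G : I → SimpleGraph X) (i : I) :
    (fiberwiseGraph G).induce {u | u.2 = i} ≃g G i where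
  toFun u := u.1.1
  invFun x := ⟨(x, i), rfl⟩
  left_inv := by rintro ⟨⟨x, _⟩, rfl⟩; rfl
  right_inv _ := rfl
  map_rel_iff' := by
    rintro ⟨⟨x, _⟩, rfl⟩ ⟨⟨y, _⟩, hy⟩
    exact ⟨fun h => ⟨hy.symm, h⟩, fun h => h.2⟩

theorem isHFactor_fiberwiseGraph {H : SimpleGraph W} (hH : H.Preconnected)
    {G : I → SimpleGraph X} (hG : ∀ i, Nonempty (G i ≃g H)) : IsHFactor H (fiberwiseGraph G) :=
  isHFactor_of_fibers hH (p := Prod.snd) (fun _ _ h => h.1) fun v =>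
    (hG v.2).map fun φ => φ.comp (fiberwiseGraphInduceIso G v.2)

/-- Multiplication by a unit `d` carries the circulant graph of jump `1` to that of jump `d`. -/
def circulantGraphOneIso {R : Type*} [Ring R] (d : Rˣ) :
    circulantGraph {(1 : R)} ≃g circulantGraph {(d : R)} where
  toEquiv := d.mulLeft
  map_rel_iff' := by
    intro x y
    have mul_eq_jump (z : R) : d * z = d ↔ z = 1 := by
      simpa using d.mul_right_inj (b := z) (c := 1)
    simp [← mul_sub, mul_eq_jump]

theorem isCycleFactor_fiberwiseGraph_circulantGraph {n : ℕ} (d : I → (ZMod (n + 1))ˣ) :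
    IsCycleFactor (n + 1) (fiberwiseGraph fun i => circulantGraph {(d i : ZMod (n + 1))}) := by
  refine isHFactor_fiberwiseGraph cycleGraph_connected.preconnected fun i => ?_
  rw [cycleGraph_eq_circulantGraph]
  exact ⟨(circulantGraphOneIso (d i)).symm⟩

end FiberwiseGraph

section IsCycleDecomp

variable {V V' : Type*} {G : SimpleGraph V} {G' : SimpleGraph V'} {m k r s : ℕ}

theorem IsCycleDecomp.of_iso (hG' : IsCycleDecomp G' m k r s) (φ : G ≃g G') :
    IsCycleDecomp G m k r s := by
  obtain ⟨F, hle, hpart, hm, hk⟩ := hG'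
  refine ⟨fun i => (F i).comap φ, fun i u v h => φ.map_rel_iff.1 (hle i h), ?_,
    fun i => (hm i).of_iso (Iso.comap φ.toEquiv _), fun j => (hk j).of_iso (Iso.comap φ.toEquiv _)⟩
  refine Sym2.ind fun u v huv => ?_
  exact hpart s(φ u, φ v) (φ.map_rel_iff.2 huv)

theorem isCycleDecomp_of_fintype {ι κ : Type*} [Fintype ι] [Fintype κ] (F : ι ⊕ κ → SimpleGraph V)
    (hle : ∀ i, F i ≤ G) (hpart : ∀ u v, G.Adj u v → ∃! i, (F i).Adj u v)
    (hm : ∀ i, IsCycleFactor m (F (Sum.inl i))) (hk : ∀ j, IsCycleFactor k (F (Sum.inr j))) :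
    IsCycleDecomp G m k (Fintype.card ι) (Fintype.card κ) := by
  let e : Fin (Fintype.card ι) ⊕ Fin (Fintype.card κ) ≃ ι ⊕ κ :=
    Equiv.sumCongr (Fintype.equivFin ι).symm (Fintype.equivFin κ).symm
  refine ⟨F ∘ e, fun i => hle (e i), Sym2.ind fun u v huv => ?_, fun i => hm _, fun j => hk _⟩
  exact e.existsUnique_congr_right.2 (hpart u v huv)

theorem existsUnique_adj_of_symmetry {ι : Type*} {F : ι → SimpleGraph V} (φ : V ≃ V) (π : ι ≃ ι)
    (hF : ∀ i u v, (F (π i)).Adj (φ u) (φ v) ↔ (F i).Adj u v) {u : V}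
    (hu : ∀ v, u ≠ v → ∃! i, (F i).Adj u v) (v : V) (hv : φ u ≠ v) :
    ∃! i, (F i).Adj (φ u) v := by
  obtain ⟨v, rfl⟩ := φ.surjective v
  rw [← π.existsUnique_congr_right, existsUnique_congr fun i => hF i u v]
  exact hu v (φ.injective.ne_iff.1 hv)

end IsCycleDecomp

/-- Translation by `t` of the first coordinate: the action of the difference group. -/
def fiberTranslation {X : Type*} (I : Type*) [AddGroup X] (t : X) : X × I ≃ X × I :=
  (Equiv.addRight t).prodCongr (Equiv.refl I)

@[simp]
theorem fiberTranslation_apply {X I : Type*} [AddGroup X] (t : X) (u : X × I) :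
    fiberTranslation I t u = (u.1 + t, u.2) := rfl

/-- The triangle of the base factor containing the vertex `(x, a)`.  The symmetry
`(x, a) ↦ (2 * x, a + 1)` fixes the coordinate `y = 4 ^ a * x = x / 2 ^ a`; in terms of `(y, a)` the
triangles are `{y} × Fin 3` for `y = ±1, ±3`, labelled `inl y`, and `{(2, a), (-2, a), (0, a + 1)}`
for `a : Fin 3`, labelled `inr a`. -/
def baseTriangle (u : ZMod 7 × Fin 3) : ZMod 7 ⊕ Fin 3 :=
  let y := 4 ^ (u.2 : ℕ) * u.1
  if y = 0 then Sum.inr (u.2 - 1) else if y = 2 ∨ y = -2 then Sum.inr u.2 else Sum.inl y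

/-- The unit `2 ^ (j + a)` of `ZMod 7`: the jump of the heptagon on fibre `a` in the `j`-th
`C₇`-factor. -/
def heptagonJump (j : Fin 2) (a : Fin 3) : (ZMod 7)ˣ :=
  ZMod.unitOfCoprime 2 (by decide) ^ (j + a : ℕ)

/-- The eight `C₃`-factors, indexed by `Option (ZMod 7)` with `none` for the translation-invariant
one and `some t` for the translate by `t` of the base factor, and the two `C₇`-factors. -/
def differenceFactor : Option (ZMod 7) ⊕ Fin 2 → SimpleGraph (ZMod 7 × Fin 3)
  | Sum.inl none => fiberCliques Prod.fst
  | Sum.inl (some t) => (fiberCliques baseTriangle).comap (fiberTranslation (Fin 3) (-t))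
  | Sum.inr j => fiberwiseGraph fun a => circulantGraph {(heptagonJump j a : ZMod 7)}

instance : ∀ i, DecidableRel (differenceFactor i).Adj
  | Sum.inl none => inferInstanceAs (DecidableRel (fiberCliques Prod.fst).Adj)
  | Sum.inl (some t) => inferInstanceAs
      (DecidableRel ((fiberCliques baseTriangle).comap (fiberTranslation (Fin 3) (-t))).Adj)
  | Sum.inr j => inferInstanceAs
      (DecidableRel (fiberwiseGraph fun a => circulantGraph {(heptagonJump j a : ZMod 7)}).Adj)

theorem card_fiber_baseTriangle :
    ∀ v, Fintype.card {u // baseTriangle u = baseTriangle v} = 3 := by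
  decide

theorem isCycleFactor_differenceFactor_inl :
    ∀ i, IsCycleFactor 3 (differenceFactor (Sum.inl i))
  | none => isCycleFactor_three_fiberCliques (by decide)
  | some t => IsHFactor.of_iso (isCycleFactor_three_fiberCliques card_fiber_baseTriangle)
      (Iso.comap (fiberTranslation (Fin 3) (-t)) _)

theorem isCycleFactor_differenceFactor_inr (j : Fin 2) :
    IsCycleFactor 7 (differenceFactor (Sum.inr j)) :=
  isCycleFactor_fiberwiseGraph_circulantGraph (heptagonJump j)

theorem differenceFactor_adj_translate (t : ZMod 7) (i : Option (ZMod 7) ⊕ Fin 2)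
    (u v : ZMod 7 × Fin 3) :
    (differenceFactor (Equiv.sumCongr (Equiv.addRight t).optionCongr (Equiv.refl _) i)).Adj
      (fiberTranslation (Fin 3) t u) (fiberTranslation (Fin 3) t v) ↔
    (differenceFactor i).Adj u v := by
  rcases i with (_ | s) | j
  · simp [differenceFactor, fiberCliques, Prod.ext_iff]
  · simp [differenceFactor, fiberCliques, Prod.ext_iff, add_assoc]
  · simp [differenceFactor, fiberwiseGraph]

theorem existsUnique_differenceFactor_adj_zero :
    ∀ (a : Fin 3) (v : ZMod 7 × Fin 3), (0, a) ≠ v → ∃! i, (differenceFactor i).Adj (0, a) v := by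
  unfold ExistsUnique
  decide

theorem existsUnique_differenceFactor_adj (u v : ZMod 7 × Fin 3) (huv : u ≠ v) :
    ∃! i, (differenceFactor i).Adj u v := by
  have translate_zero : fiberTranslation (Fin 3) u.1 (0, u.2) = u := by simp
  rw [← translate_zero] at huv ⊢
  exact existsUnique_adj_of_symmetry _ _ (differenceFactor_adj_translate u.1)
    (existsUnique_differenceFactor_adj_zero u.2) v huv

/-- Lemma 3.2: `(K₂₁; C₃^8, C₇^2)` exists. -/
theorem K21_cycle_decomp_8_2 :
    IsCycleDecomp (⊤ : SimpleGraph (Fin 21)) 3 7 8 2 := by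
  have decomp : IsCycleDecomp (⊤ : SimpleGraph (ZMod 7 × Fin 3)) 3 7 8 2 :=
    isCycleDecomp_of_fintype differenceFactor (fun _ => le_top)
      existsUnique_differenceFactor_adj isCycleFactor_differenceFactor_inl
      isCycleFactor_differenceFactor_inr
  exact decomp.of_iso (Iso.completeGraph (finProdFinEquiv (m := 7) (n := 3)).symm)
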